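/- arXiv:2510.04221 — 2 statements merged into one kernel-verified Lean document; each statement's English description precedes it below -/
import Mathlib

section
/- In the minimalistic affine super Yangian Y_ℏ(ŝl(m|n,Π)) with recursively defined higher generators x^±_{α_i,r}, h_{α_i,r} (r ≥ 2), one has for all i, j ∈ I and all r ≥ 0: [h̃_{α_i,1}, x^±_{α_j,r}] = ± a_{ij} x^±_{α_j,r+1}, and [h_{α_i,0}, x^±_{α_j,r}] = ± a_{ij} x^±_{α_j,r}. -/
/-!
The elements `h_{α_i,0}` and `h̃_{α_i,1}` are even and commute pairwise, so their adjoint actions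
commute. Since `a_{j+1,j} = −(e_{j+1}, e_{j+1})` is nonzero (here `m + n ≥ 4` is used, so that the
positions `j`, `j+1`, `j+2` are distinct), the relation `[h̃_{j+1}, x_{j,0}] = ± a_{j+1,j} x_{j,1}`
shows that the recursion `x_{j,r+1} = ± a_{j+1,j}⁻¹ [h̃_{j+1}, x_{j,r}]` holds for `r = 0` too.
Hence each `x_{j,r}` is a scalar multiple of `(ad h̃_{j+1})^r x_{j,0}`, and an identity
`[u, x_{j,0}] = b x_{j,s}` with `u` commuting with `h̃_{j+1}` propagates to
`[u, x_{j,r}] = b x_{j,r+s}` by induction (`sbr_propagate`). The cases `u = h̃_i`, `s = 1` and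
`u = h_{i,0}`, `s = 0` are the claim.
-/

/-!
Common framework for formalizing statements about affine super Yangians
`Y_ℏ(ŝl(m|n,Π))` attached to a simple root system `Π` of the affine
Kac–Moody superalgebra `ŝl(m|n)` of type `A^{(1)}(m−1|n−1)`.
-/

noncomputable section

namespace ASY

open scoped TensorProduct

/-- The ground ring `ℂ[ℏ]`. -/
abbrev R : Type := Polynomial ℂ

/-- The formal deformation parameter `ℏ`. -/
def hbar : R := Polynomial.X

/-- `1/2` as an element of `ℂ[ℏ]`. -/
def half : R := Polynomial.C (1/2 : ℂ)

/-- The sign `(−1)^{p(a)p(b)}` attached to parities `pa`, `pb`. -/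
def sg (pa pb : Bool) : R := if pa && pb then -1 else 1

section SuperOps

variable {Y : Type*} [Ring Y] [Algebra R Y]

/-- The supercommutator `[a,b] = ab − (−1)^{p(a)p(b)} ba` of homogeneous elements of
parities `pa` and `pb`. -/
def sbr (pa pb : Bool) (x y : Y) : Y := x * y - sg pa pb • (y * x)

/-- The super anticommutator `{a,b} = ab + (−1)^{p(a)p(b)} ba`. -/
def sac (pa pb : Bool) (x y : Y) : Y := x * y + sg pa pb • (y * x)

/-- Iterated super-adjoint action `(ad x)^k y` for `x` of parity `pa` and `y` of parity `pb`. -/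
def adN (pa pb : Bool) (x : Y) : ℕ → Y → Y
  | 0, y => y
  | k + 1, y => sbr pa (xor pb (pa && decide (k % 2 = 1))) x (adN pa pb x k y)

/-- Iterated super-bracket `[x₁,[x₂,…,[x_k, y]…]]`, all `xᵢ` of parity `pa`, `y` of parity `pb`. -/
def adSeq (pa pb : Bool) : List Y → Y → Y
  | [], y => y
  | x :: l, y => sbr pa (xor pb (pa && decide (l.length % 2 = 1))) x (adSeq pa pb l y)

end SuperOps

/-- A simple root system `Π` of the affine Kac–Moody superalgebra `ŝl(m|n)`
(type `A^{(1)}(m−1|n−1)`): a cyclic arrangement of the `m + n` weights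
`ε₁,…,ε_m, δ₁,…,δ_n`, recorded by the type of the weight at each position
(`false` = an `ε`-weight of norm `+1`, `true` = a `δ`-weight of norm `−1`);
the simple roots are `α_i = e_i − e_{i+1}` (indices mod `m+n`). -/
structure SimpleRootSystem (m n : ℕ) : Type where
  /-- the type of the weight at each position -/
  τ : Fin (m + n) → Bool
  /-- there are exactly `n` weights of `δ`-type -/
  card_delta : (Finset.univ.filter fun k => τ k = true).card = n

namespace SimpleRootSystem

variable {m n : ℕ}

/-- The norm `(e_k, e_k) = ±1` of the `k`-th weight. -/
def w (P : SimpleRootSystem m n) (k : Fin (m + n)) : ℤ := if P.τ k then -1 else 1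

variable [NeZero (m + n)]

/-- The coefficient of `e_k` in the simple root `α_i = e_i − e_{i+1}`. -/
def coeffα (i k : Fin (m + n)) : ℤ := (if k = i then 1 else 0) - (if k = i + 1 then 1 else 0)

/-- The (symmetric) Cartan matrix `a_{ij} = (α_i, α_j)` of `Π`. -/
def a (P : SimpleRootSystem m n) (i j : Fin (m + n)) : ℤ :=
  ∑ k, P.w k * coeffα i k * coeffα j k

/-- The parity of the simple root `α_i` (`true` iff `α_i` is odd, iff `a_{ii} = 0`). -/
def par (P : SimpleRootSystem m n) (i : Fin (m + n)) : Bool := P.τ i != P.τ (i + 1)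

/-- The reflection `s_{α_i}` on simple root systems: on the weight arrangement it
swaps the weights at positions `i` and `i+1`.  For `α_i` even it preserves `Π`;
for `α_i` odd it is the odd reflection `Π ↦ Π₁`. -/
def reflect (P : SimpleRootSystem m n) (i : Fin (m + n)) : SimpleRootSystem m n where
  τ := P.τ ∘ Equiv.swap i (i + 1)
  card_delta := by
    have h1 : (Finset.univ.filter fun k => (P.τ ∘ Equiv.swap i (i + 1)) k = true).card
        = (Finset.univ.filter fun k => P.τ k = true).card :=
      Finset.card_equiv (Equiv.swap i (i + 1)) (fun k => by simp)
    rw [h1, P.card_delta]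

/-- Applying a word of simple reflections to a simple root system. -/
def applyWord (P : SimpleRootSystem m n) : List (Fin (m + n)) → SimpleRootSystem m n
  | [] => P
  | c :: l => applyWord (P.reflect c) l

/-- The word consists of even reflections at every stage (i.e. it represents an
element of the Weyl group, generated by even reflections). -/
def IsEvenWord (P : SimpleRootSystem m n) : List (Fin (m + n)) → Prop
  | [] => True
  | c :: l => P.par c = false ∧ IsEvenWord (P.reflect c) l

end SimpleRootSystem

end ASY

namespace ASY

/-- Generators of the minimalistic affine super Yangian: `x^±_{α_i,r}`, `h_{α_i,r}`
with `i ∈ I` and `r ∈ {0,1}`. -/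
inductive MGen (N : ℕ) : Type
  | xp (i : Fin N) (r : Fin 2)
  | xm (i : Fin N) (r : Fin 2)
  | h (i : Fin N) (r : Fin 2)

/-- The free algebra on the minimalistic generators. -/
abbrev MFree (m n : ℕ) : Type := FreeAlgebra R (MGen (m + n))

section MinDefs

variable {m n : ℕ}

/-- `x^+_{α_i,r}` in the free algebra. -/
def MXp (i : Fin (m + n)) (r : Fin 2) : MFree m n := FreeAlgebra.ι R (MGen.xp i r)

/-- `x^−_{α_i,r}` in the free algebra. -/
def MXm (i : Fin (m + n)) (r : Fin 2) : MFree m n := FreeAlgebra.ι R (MGen.xm i r)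

/-- `h_{α_i,r}` in the free algebra. -/
def MH (i : Fin (m + n)) (r : Fin 2) : MFree m n := FreeAlgebra.ι R (MGen.h i r)

/-- `h̃_{α_i,1} = h_{α_i,1} − (ℏ/2) h_{α_i,0}²` in the free algebra. -/
def MHt (i : Fin (m + n)) : MFree m n := MH i 1 - (half * hbar) • (MH i 0 * MH i 0)

variable [NeZero (m + n)]

/-- The defining relations of the minimalistic affine super Yangian `Y_ℏ(ŝl(m|n,Π))`. -/
inductive MRel (P : SimpleRootSystem m n) : MFree m n → MFree m n → Prop
  /-- `[h_{α_i,r}, h_{α_j,s}] = 0` -/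
  | hh (i j : Fin (m + n)) (r s : Fin 2) :
      MRel P (sbr false false (MH i r) (MH j s)) 0
  /-- `[x^+_{α_i,0}, x^−_{α_j,0}] = δ_{ij} h_{α_i,0}` -/
  | pm00 (i j : Fin (m + n)) :
      MRel P (sbr (P.par i) (P.par j) (MXp i 0) (MXm j 0)) (if i = j then MH i 0 else 0)
  /-- `[x^+_{α_i,1}, x^−_{α_j,0}] = δ_{ij} h_{α_i,1}` -/
  | pm10 (i j : Fin (m + n)) :
      MRel P (sbr (P.par i) (P.par j) (MXp i 1) (MXm j 0)) (if i = j then MH i 1 else 0)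
  /-- `[x^+_{α_i,0}, x^−_{α_j,1}] = δ_{ij} h_{α_i,1}` -/
  | pm01 (i j : Fin (m + n)) :
      MRel P (sbr (P.par i) (P.par j) (MXp i 0) (MXm j 1)) (if i = j then MH i 1 else 0)
  /-- `[h_{α_i,0}, x^+_{α_j,r}] = a_{ij} x^+_{α_j,r}` -/
  | hxp (i j : Fin (m + n)) (r : Fin 2) :
      MRel P (sbr false (P.par j) (MH i 0) (MXp j r)) (((P.a i j : ℤ) : R) • MXp j r)
  /-- `[h_{α_i,0}, x^−_{α_j,r}] = −a_{ij} x^−_{α_j,r}` -/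
  | hxm (i j : Fin (m + n)) (r : Fin 2) :
      MRel P (sbr false (P.par j) (MH i 0) (MXm j r)) ((-(P.a i j : ℤ) : R) • MXm j r)
  /-- `[x^+_{α_i,1},x^+_{α_j,0}] − [x^+_{α_i,0},x^+_{α_j,1}] = (ℏ a_{ij}/2){x^+_{α_i,0},x^+_{α_j,0}}` -/
  | mixp (i j : Fin (m + n)) :
      MRel P (sbr (P.par i) (P.par j) (MXp i 1) (MXp j 0)
          - sbr (P.par i) (P.par j) (MXp i 0) (MXp j 1))
        ((half * hbar * ((P.a i j : ℤ) : R)) • sac (P.par i) (P.par j) (MXp i 0) (MXp j 0))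
  /-- `[x^−_{α_i,1},x^−_{α_j,0}] − [x^−_{α_i,0},x^−_{α_j,1}] = −(ℏ a_{ij}/2){x^−_{α_i,0},x^−_{α_j,0}}` -/
  | mixm (i j : Fin (m + n)) :
      MRel P (sbr (P.par i) (P.par j) (MXm i 1) (MXm j 0)
          - sbr (P.par i) (P.par j) (MXm i 0) (MXm j 1))
        ((-(half * hbar * ((P.a i j : ℤ) : R))) • sac (P.par i) (P.par j) (MXm i 0) (MXm j 0))
  /-- `[h̃_{α_i,1}, x^+_{α_j,0}] = a_{ij} x^+_{α_j,1}` -/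
  | htxp (i j : Fin (m + n)) :
      MRel P (sbr false (P.par j) (MHt i) (MXp j 0)) (((P.a i j : ℤ) : R) • MXp j 1)
  /-- `[h̃_{α_i,1}, x^−_{α_j,0}] = −a_{ij} x^−_{α_j,1}` -/
  | htxm (i j : Fin (m + n)) :
      MRel P (sbr false (P.par j) (MHt i) (MXm j 0)) ((-(P.a i j : ℤ) : R) • MXm j 1)
  /-- Serre relation `(ad x^+_{α_i,0})^{1+|a_{ij}|}(x^+_{α_j,0}) = 0`, `i ≠ j` -/
  | serrep (i j : Fin (m + n)) (hij : i ≠ j) :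
      MRel P (adN (P.par i) (P.par j) (MXp i 0) (1 + (P.a i j).natAbs) (MXp j 0)) 0
  /-- Serre relation `(ad x^−_{α_i,0})^{1+|a_{ij}|}(x^−_{α_j,0}) = 0`, `i ≠ j` -/
  | serrem (i j : Fin (m + n)) (hij : i ≠ j) :
      MRel P (adN (P.par i) (P.par j) (MXm i 0) (1 + (P.a i j).natAbs) (MXm j 0)) 0
  /-- `[x^+_{α_t,0}, x^+_{α_t,0}] = 0` for `α_t` odd -/
  | oddp (t : Fin (m + n)) (ht : P.par t = true) :
      MRel P (sbr true true (MXp t 0) (MXp t 0)) 0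
  /-- `[x^−_{α_t,0}, x^−_{α_t,0}] = 0` for `α_t` odd -/
  | oddm (t : Fin (m + n)) (ht : P.par t = true) :
      MRel P (sbr true true (MXm t 0) (MXm t 0)) 0
  /-- `[[x^+_{α_{t−1},0},x^+_{α_t,0}],[x^+_{α_t,0},x^+_{α_{t+1},0}]] = 0` for `α_t` odd -/
  | oddSp (t : Fin (m + n)) (ht : P.par t = true) :
      MRel P (sbr (xor (P.par (t - 1)) true) (xor true (P.par (t + 1)))
        (sbr (P.par (t - 1)) true (MXp (t - 1) 0) (MXp t 0))
        (sbr true (P.par (t + 1)) (MXp t 0) (MXp (t + 1) 0))) 0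
  /-- `[[x^−_{α_{t−1},0},x^−_{α_t,0}],[x^−_{α_t,0},x^−_{α_{t+1},0}]] = 0` for `α_t` odd -/
  | oddSm (t : Fin (m + n)) (ht : P.par t = true) :
      MRel P (sbr (xor (P.par (t - 1)) true) (xor true (P.par (t + 1)))
        (sbr (P.par (t - 1)) true (MXm (t - 1) 0) (MXm t 0))
        (sbr true (P.par (t + 1)) (MXm t 0) (MXm (t + 1) 0))) 0

/-- The minimalistic affine super Yangian `Y_ℏ(ŝl(m|n,Π))`, presented on the
generators `x^±_{α_i,r}`, `h_{α_i,r}` (`r ∈ {0,1}`) by the minimalistic relations. -/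
abbrev Ymin (P : SimpleRootSystem m n) : Type := RingQuot (MRel P)

/-- The canonical projection from the free algebra onto `Y_ℏ(ŝl(m|n,Π))`. -/
def mkY (P : SimpleRootSystem m n) : MFree m n →ₐ[R] Ymin P := RingQuot.mkAlgHom R (MRel P)

/-- The generator `x^+_{α_i,r}` of `Y_ℏ(ŝl(m|n,Π))`. -/
def xgp (P : SimpleRootSystem m n) (i : Fin (m + n)) (r : Fin 2) : Ymin P := mkY P (MXp i r)

/-- The generator `x^−_{α_i,r}` of `Y_ℏ(ŝl(m|n,Π))`. -/
def xgm (P : SimpleRootSystem m n) (i : Fin (m + n)) (r : Fin 2) : Ymin P := mkY P (MXm i r)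

/-- The generator `h_{α_i,r}` of `Y_ℏ(ŝl(m|n,Π))`. -/
def hg (P : SimpleRootSystem m n) (i : Fin (m + n)) (r : Fin 2) : Ymin P := mkY P (MH i r)

/-- The element `h̃_{α_i,1} = h_{α_i,1} − (ℏ/2)h_{α_i,0}²` of `Y_ℏ(ŝl(m|n,Π))`. -/
def htilY (P : SimpleRootSystem m n) (i : Fin (m + n)) : Ymin P := mkY P (MHt i)

/-- The scalar `a_{i+1,i}⁻¹ ∈ ℂ ⊆ ℂ[ℏ]`. -/
def acoef (P : SimpleRootSystem m n) (i : Fin (m + n)) : R :=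
  Polynomial.C (((P.a (i + 1) i : ℤ) : ℂ)⁻¹)

/-- The recursively defined higher generators
`x^+_{α_i,r+1} := a_{i+1,i}⁻¹ [h̃_{α_{i+1},1}, x^+_{α_i,r}]` (`r ≥ 1`). -/
def xpn (P : SimpleRootSystem m n) (i : Fin (m + n)) : ℕ → Ymin P
  | 0 => xgp P i 0
  | 1 => xgp P i 1
  | r + 2 => acoef P i • sbr false (P.par i) (htilY P (i + 1)) (xpn P i (r + 1))

/-- The recursively defined higher generators
`x^−_{α_i,r+1} := −a_{i+1,i}⁻¹ [h̃_{α_{i+1},1}, x^−_{α_i,r}]` (`r ≥ 1`). -/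
def xmn (P : SimpleRootSystem m n) (i : Fin (m + n)) : ℕ → Ymin P
  | 0 => xgm P i 0
  | 1 => xgm P i 1
  | r + 2 => (-acoef P i) • sbr false (P.par i) (htilY P (i + 1)) (xmn P i (r + 1))

/-- The recursively defined higher Cartan generators
`h_{α_i,r+1} := [x^+_{α_i,r+1}, x^−_{α_i,0}]` (`r ≥ 1`). -/
def hcn (P : SimpleRootSystem m n) (i : Fin (m + n)) : ℕ → Ymin P
  | 0 => hg P i 0
  | 1 => hg P i 1
  | r + 2 => sbr (P.par i) (P.par i) (xpn P i (r + 2)) (xmn P i 0)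

end MinDefs

end ASY

namespace ASY

/-! ### Adjoint actions of commuting even elements -/

section Abstract

variable {Y : Type*} [Ring Y] [Algebra R Y]

lemma sbr_false (p : Bool) (x y : Y) : sbr false p x y = x * y - y * x := by
  simp [sbr, sg]

lemma sbr_false_smul (p : Bool) (c : R) (x y : Y) :
    sbr false p x (c • y) = c • sbr false p x y := by
  simp only [sbr_false, mul_smul_comm, smul_mul_assoc, smul_sub]

/-- Adjoint actions of commuting even elements commute (Jacobi identity). -/
lemma sbr_false_comm (p : Bool) {u v : Y} (huv : Commute u v) (y : Y) :
    sbr false p u (sbr false p v y) = sbr false p v (sbr false p u y) := by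
  have h1 : u * v = v * u := huv
  have h2 : u * (v * y) = v * (u * y) := by rw [← mul_assoc, h1, mul_assoc]
  have h3 : y * v * u = y * u * v := by rw [mul_assoc, ← h1, mul_assoc]
  simp only [sbr_false, mul_sub, sub_mul, h2, h3, mul_assoc]
  abel

lemma commute_sub_smul_sq (c : R) {u v w : Y} (huv : Commute u v) (huw : Commute u w) :
    Commute u (v - c • (w * w)) :=
  huv.sub_right ((huw.mul_right huw).smul_right c)

/-- If `x (r+1) = c [v, x r]` for all `r` and `u` commutes with `v`, then an identity
`[u, x 0] = b x s` propagates to `[u, x r] = b x (r+s)`. -/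
lemma sbr_propagate (p : Bool) {u v : Y} (huv : Commute u v) (x : ℕ → Y) (c b : R) (s : ℕ)
    (hx : ∀ r, x (r + 1) = c • sbr false p v (x r))
    (h0 : sbr false p u (x 0) = b • x s) (r : ℕ) :
    sbr false p u (x r) = b • x (r + s) := by
  induction r with
  | zero => simpa using h0
  | succ r ih =>
    rw [hx r, sbr_false_smul, sbr_false_comm p huv, ih, sbr_false_smul, smul_comm c b,
      ← hx (r + s), Nat.add_right_comm]

end Abstract

/-! ### Relations in the minimalistic Yangian -/

section Yangian

variable {m n : ℕ} [NeZero (m + n)]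

lemma a_succ_ne_zero (h : 3 ≤ m + n) (P : SimpleRootSystem m n) (j : Fin (m + n)) :
    P.a (j + 1) j ≠ 0 := by
  have h1 : j + 1 ≠ j := by
    intro e
    have := congrArg Fin.val e
    have hj := j.isLt
    rw [Fin.val_add, Fin.val_one', Nat.mod_eq_of_lt (a := 1) (by omega)] at this
    rcases Nat.lt_or_ge (j.val + 1) (m + n) with h' | h'
    · rw [Nat.mod_eq_of_lt h'] at this; omega
    · rw [Nat.mod_eq_sub_mod h', Nat.mod_eq_of_lt (by omega)] at this; omega
  have h2 : j ≠ j + 1 + 1 := by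
    intro e
    have := congrArg Fin.val e
    have hj := j.isLt
    rw [Fin.val_add, Fin.val_add, Fin.val_one', Nat.mod_eq_of_lt (a := 1) (by omega),
      Nat.mod_add_mod] at this
    rcases Nat.lt_or_ge (j.val + 1 + 1) (m + n) with h' | h'
    · rw [Nat.mod_eq_of_lt h'] at this; omega
    · rw [Nat.mod_eq_sub_mod h', Nat.mod_eq_of_lt (by omega)] at this; omega
  have h3 : j + 1 ≠ j + 1 + 1 := fun e => h1 (add_right_cancel e).symm
  have key : P.a (j + 1) j = -P.w (j + 1) := by
    unfold SimpleRootSystem.a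
    rw [Finset.sum_eq_single (j + 1)]
    · simp [SimpleRootSystem.coeffα, h1, h3]
    · intro k _ hk
      by_cases hkj : k = j
      · subst hkj
        simp [SimpleRootSystem.coeffα, h1.symm, h2]
      · simp [SimpleRootSystem.coeffα, hk, hkj]
    · simp
  rw [key]
  unfold SimpleRootSystem.w
  split <;> simp

lemma acoef_mul_a (h : 3 ≤ m + n) (P : SimpleRootSystem m n) (j : Fin (m + n)) :
    acoef P j * ((P.a (j + 1) j : ℤ) : R) = 1 := by
  have hC : ((P.a (j + 1) j : ℤ) : R) = Polynomial.C ((P.a (j + 1) j : ℤ) : ℂ) := by simp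
  rw [hC, acoef, ← Polynomial.C_mul,
    inv_mul_cancel₀ (Int.cast_ne_zero.mpr (a_succ_ne_zero h P j)), Polynomial.C_1]

lemma mkY_sbr (P : SimpleRootSystem m n) (p q : Bool) (x y : MFree m n) :
    mkY P (sbr p q x y) = sbr p q (mkY P x) (mkY P y) := by
  simp only [sbr, map_sub, map_mul, map_smul]

lemma mkY_rel (P : SimpleRootSystem m n) {x y : MFree m n} (h : MRel P x y) :
    mkY P x = mkY P y :=
  RingQuot.mkAlgHom_rel R h

lemma hg_commute (P : SimpleRootSystem m n) (i j : Fin (m + n)) (r s : Fin 2) :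
    Commute (hg P i r) (hg P j s) := by
  have h := mkY_rel P (MRel.hh i j r s)
  rw [mkY_sbr, map_zero, sbr_false] at h
  exact sub_eq_zero.mp h

lemma htilY_eq (P : SimpleRootSystem m n) (i : Fin (m + n)) :
    htilY P i = hg P i 1 - (half * hbar) • (hg P i 0 * hg P i 0) := by
  simp only [htilY, MHt, hg, map_sub, map_smul, map_mul]

lemma hg_commute_htilY (P : SimpleRootSystem m n) (i j : Fin (m + n)) (r : Fin 2) :
    Commute (hg P i r) (htilY P j) := by
  rw [htilY_eq]
  exact commute_sub_smul_sq (Y := Ymin P) _ (hg_commute P i j r 1) (hg_commute P i j r 0)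

lemma htilY_commute (P : SimpleRootSystem m n) (i j : Fin (m + n)) :
    Commute (htilY P i) (htilY P j) := by
  rw [htilY_eq P i]
  exact (commute_sub_smul_sq (Y := Ymin P) _ (hg_commute_htilY P i j 1).symm
    (hg_commute_htilY P i j 0).symm).symm

lemma htilY_xpn_zero (P : SimpleRootSystem m n) (i j : Fin (m + n)) :
    sbr false (P.par j) (htilY P i) (xpn P j 0) = ((P.a i j : ℤ) : R) • xpn P j 1 := by
  have h := mkY_rel P (MRel.htxp i j)
  rwa [mkY_sbr, map_smul] at h

lemma htilY_xmn_zero (P : SimpleRootSystem m n) (i j : Fin (m + n)) :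
    sbr false (P.par j) (htilY P i) (xmn P j 0) = (-(P.a i j : ℤ) : R) • xmn P j 1 := by
  have h := mkY_rel P (MRel.htxm i j)
  rwa [mkY_sbr, map_smul] at h

lemma hg_xpn_zero (P : SimpleRootSystem m n) (i j : Fin (m + n)) :
    sbr false (P.par j) (hg P i 0) (xpn P j 0) = ((P.a i j : ℤ) : R) • xpn P j 0 := by
  have h := mkY_rel P (MRel.hxp i j 0)
  rwa [mkY_sbr, map_smul] at h

lemma hg_xmn_zero (P : SimpleRootSystem m n) (i j : Fin (m + n)) :
    sbr false (P.par j) (hg P i 0) (xmn P j 0) = (-(P.a i j : ℤ) : R) • xmn P j 0 := by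
  have h := mkY_rel P (MRel.hxm i j 0)
  rwa [mkY_sbr, map_smul] at h

/-- The recursion defining `x^+_{α_j,r+1}` for `r ≥ 1` also holds for `r = 0`. -/
lemma xpn_succ (h : 3 ≤ m + n) (P : SimpleRootSystem m n) (j : Fin (m + n)) (r : ℕ) :
    xpn P j (r + 1) = acoef P j • sbr false (P.par j) (htilY P (j + 1)) (xpn P j r) := by
  cases r with
  | zero => rw [htilY_xpn_zero, smul_smul, acoef_mul_a h, one_smul]
  | succ r => rfl

/-- The recursion defining `x^−_{α_j,r+1}` for `r ≥ 1` also holds for `r = 0`. -/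
lemma xmn_succ (h : 3 ≤ m + n) (P : SimpleRootSystem m n) (j : Fin (m + n)) (r : ℕ) :
    xmn P j (r + 1) = (-acoef P j) • sbr false (P.par j) (htilY P (j + 1)) (xmn P j r) := by
  cases r with
  | zero => rw [htilY_xmn_zero, smul_smul, neg_mul_neg, acoef_mul_a h, one_smul]
  | succ r => rfl

end Yangian

/-- In the minimalistic affine super Yangian `Y_ℏ(ŝl(m|n,Π))` with
recursively defined higher generators `x^±_{α_i,r}`, `h_{α_i,r}` (`r ≥ 2`), one has for all
`i, j ∈ I` and all `r ≥ 0`: `[h̃_{α_i,1}, x^±_{α_j,r}] = ± a_{ij} x^±_{α_j,r+1}` and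
`[h_{α_i,0}, x^±_{α_j,r}] = ± a_{ij} x^±_{α_j,r}`. -/
theorem htilde_raises_degree (m n : ℕ) [NeZero (m + n)]
    (hm : 2 ≤ m) (hn : 2 ≤ n) (hmn : m ≠ n)
    (P : SimpleRootSystem m n) :
    ∀ (i j : Fin (m + n)) (r : ℕ),
      sbr false (P.par j) (htilY P i) (xpn P j r) = (((P.a i j : ℤ)) : R) • xpn P j (r + 1) ∧
      sbr false (P.par j) (htilY P i) (xmn P j r) = ((-(P.a i j : ℤ)) : R) • xmn P j (r + 1) ∧
      sbr false (P.par j) (hg P i 0) (xpn P j r) = (((P.a i j : ℤ)) : R) • xpn P j r ∧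
      sbr false (P.par j) (hg P i 0) (xmn P j r) = ((-(P.a i j : ℤ)) : R) • xmn P j r := by
  intro i j r
  have h : 3 ≤ m + n := by omega
  exact ⟨sbr_propagate _ (htilY_commute P i (j + 1)) _ _ _ 1 (xpn_succ h P j)
      (htilY_xpn_zero P i j) r,
    sbr_propagate _ (htilY_commute P i (j + 1)) _ _ _ 1 (xmn_succ h P j)
      (htilY_xmn_zero P i j) r,
    sbr_propagate _ (hg_commute_htilY P i (j + 1) 0) _ _ _ 0 (xpn_succ h P j)
      (hg_xpn_zero P i j) r,
    sbr_propagate _ (hg_commute_htilY P i (j + 1) 0) _ _ _ 0 (xmn_succ h P j)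
      (hg_xmn_zero P i j) r⟩

end ASY
end
end

section
/- In the minimalistic affine super Yangian Y_ℏ(ŝl(m|n,Π)) with recursively defined higher generators: if α_i is an odd simple root and α_j is a simple root with (α_i, α_j) ≠ 0, then [h_{α_j,2}, h_{α_j,1}] = 0; likewise [h_{α_i,2}, h_{α_i,1}] = 0 holds for every even simple root α_i. -/
/-!
The claim holds for every simple root, by a two-node argument.

Write `T k = h̃_{α_k,1}`.  The operators `ad T k` commute and satisfy
`[T k, x^±_{j,s}] = ± a_{kj} x^±_{j,s+1}` for all `k, j, s` (`YSys.T_xp`, `YSys.T_xm`), so they shift the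
relations of low degree to higher degree.  With `u_{rs} = [x^+_{i,r}, x^-_{i,s}]` one gets
`u_{20} = u_{11} = u_{02} = h_{i,2}`, and `[T k, h_{i,2}] = a_{ki} D_i` with the defect
`D_i = u_{21} - u_{12} = u_{30} - u_{21}`; hence `[h_{i,2}, h_{i,1}] = -a_{ii} D_i`, and it suffices
that `D_i = 0`.

Let `j` be a neighbour of `i`.  Since the cyclic diagram has at least four nodes, some node is
joined to `i` but not to `j`, and vice versa, so the degree shifts on `i` and on `j` can be performed
independently.  Bracketing the shifted quadratic relations with `x^∓_{i,0}` shows that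
`h̃_{i,2} = h_{i,2} - ℏ h_{i,0} h_{i,1} + (ℏ²/3) h_{i,0}³` satisfies
`[h̃_{i,2}, x^±_{j,s}] = ±(a_{ij} x^±_{j,s+2} + (ℏ²/12) a_{ij}³ x^±_{j,s})` (`YSys.Ht_xp`, `YSys.Ht_xm`).
Applied to `h_{j,1} = [x^+_{j,1}, x^-_{j,0}]` this gives `[h_{i,2}, h_{j,1}] = 2 a_{ij} D_j`, while the
left side is `-a_{ij} D_i`.  So `D_i = -2 D_j` (`YSys.defect_rel`), by symmetry `D_j = -2 D_i`, and
`3 D_i = 0`.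
-/

/-!
Common framework for formalizing statements about affine super Yangians
`Y_ℏ(ŝl(m|n,Π))` attached to a simple root system `Π` of the affine
Kac–Moody superalgebra `ŝl(m|n)` of type `A^{(1)}(m−1|n−1)`.
-/

noncomputable section

namespace ASY

/-! ### Identities in an associative algebra -/

section Abstract

variable {Y : Type*} [Ring Y] [Algebra R Y]

/-- An even derivation `[t, ·]` applied to `x y - e y x`. -/
theorem comm_sbr {t x y x' y' z : Y} {α β e : R}
    (hx : t * x - x * t = α • x') (hy : t * y - y * t = β • y')
    (hz : x * y - e • (y * x) = z) :
    α • (x' * y - e • (y * x')) + β • (x * y' - e • (y' * x)) = t * z - z * t := by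
  subst hz
  have h1 : α • (x' * y - e • (y * x')) = (t * x - x * t) * y - e • (y * (t * x - x * t)) := by
    rw [hx]; simp only [smul_mul_assoc, mul_smul_comm]; module
  have h2 : β • (x * y' - e • (y' * x)) = x * (t * y - y * t) - e • ((t * y - y * t) * x) := by
    rw [hy]; simp only [smul_mul_assoc, mul_smul_comm]; module
  rw [h1, h2]
  simp only [mul_sub, sub_mul, smul_mul_assoc, mul_smul_comm, mul_assoc]
  module

/-- Bracketing `x y + s y x` with an element `z` that supercommutes with `y`. -/
theorem bracket_quadratic {x y z k : Y} {e f : R} (s : R) (he : e * e = 1)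
    (hx : x * z - f • (z * x) = k) (hy : y * z - e • (z * y) = 0) :
    e • ((x * y + s • (y * x)) * z) - f • (z * (x * y + s • (y * x)))
      = k * y + (e * s) • (y * k) := by
  subst hx
  have hy' : y * z = e • (z * y) := sub_eq_zero.mp hy
  have hy'' : ∀ w, y * (z * w) = e • (z * (y * w)) := by
    intro w; rw [← mul_assoc, hy', smul_mul_assoc, mul_assoc]
  simp only [hy', hy'', mul_sub, sub_mul, mul_add, add_mul, smul_mul_assoc, mul_smul_comm,
    mul_assoc]
  match_scalars
  · linear_combination he
  · ring
  · ring
  · linear_combination s * f * he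

/-- Bracketing `[x₁, y₀] - [x₀, y₁] = b {x₀, y₀}` with an element `z` that supercommutes with `y₀`
and `y₁` replaces each `xᵣ` by its superbracket `kᵣ` with `z`. -/
theorem mix_bracket {x0 x1 y0 y1 z k0 k1 : Y} {e f b : R} (he : e * e = 1)
    (hmix : (x1 * y0 - e • (y0 * x1)) - (x0 * y1 - e • (y1 * x0))
      = b • (x0 * y0 + e • (y0 * x0)))
    (h0 : x0 * z - f • (z * x0) = k0) (h1 : x1 * z - f • (z * x1) = k1)
    (hy0 : y0 * z - e • (z * y0) = 0) (hy1 : y1 * z - e • (z * y1) = 0) :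
    (k1 * y0 - y0 * k1) - (k0 * y1 - y1 * k0) = b • (k0 * y0 + y0 * k0) := by
  have A1 := bracket_quadratic (-e) he h1 hy0
  have A2 := bracket_quadratic (-e) he h0 hy1
  have A3 := bracket_quadratic e he h0 hy0
  have B := congrArg (fun w => e • (w * z) - f • (z * w)) hmix
  simp only [mul_neg, he, neg_smul, one_smul, ← sub_eq_add_neg] at A1 A2 A3
  rw [← A1, ← A2, ← A3]
  simp only [sub_mul (_ - _), mul_sub _ (_ - _), smul_mul_assoc, mul_smul_comm] at B
  linear_combination (norm := module) B

/-- The action of `H2 - ℏ H0 H1 + (ℏ²/3) H0³` on `x`, with `c = ℏ/2`, `d = c²/3`. -/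
theorem htwo_core {H0 H1 H2 x0 x1 x2 : Y} {a c d : R} (hd : 3 * d = c * c)
    (h00 : H0 * x0 - x0 * H0 = a • x0) (h01 : H0 * x1 - x1 * H0 = a • x1)
    (h10 : H1 * x0 - x0 * H1 = a • x1 + (c * a) • (H0 * x0 + x0 * H0))
    (h11 : H1 * x1 - x1 * H1 = a • x2 + (c * a) • (H0 * x1 + x1 * H0))
    (h2 : (H2 * x0 - x0 * H2) - (H1 * x1 - x1 * H1) = (c * a) • (H1 * x0 + x0 * H1)) :
    (H2 - (2 * c) • (H0 * H1) + (4 * d) • (H0 * (H0 * H0))) * x0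
      - x0 * (H2 - (2 * c) • (H0 * H1) + (4 * d) • (H0 * (H0 * H0)))
      = a • x2 + (d * a ^ 3) • x0 := by
  have e00 : x0 * H0 = H0 * x0 - a • x0 := by rw [← h00]; abel
  have e01 : x1 * H0 = H0 * x1 - a • x1 := by rw [← h01]; abel
  have e10 : x0 * H1 = H1 * x0 - (a • x1 + (c * a) • (H0 * x0 + x0 * H0)) := by rw [← h10]; abel
  have e2 : x0 * H2 = H2 * x0 - (H1 * x1 - x1 * H1) - (c * a) • (H1 * x0 + x0 * H1) := by
    rw [← h2]; abel
  rw [h11] at e2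
  have f00 : ∀ z, x0 * (H0 * z) = H0 * (x0 * z) - a • (x0 * z) := by
    intro z; rw [← mul_assoc, e00, sub_mul, smul_mul_assoc, mul_assoc]
  simp only [e00, e01, e10, e2, f00, mul_sub, sub_mul, mul_add, add_mul, smul_mul_assoc,
    mul_smul_comm, mul_assoc]
  have hc : c ^ 2 = 3 * d := by rw [hd]; ring
  match_scalars <;> first | ring1 | grind

end Abstract

theorem sg_mul_self (p q : Bool) : sg p q * sg p q = 1 := by
  cases p <;> cases q <;> simp [sg]

theorem sg_symm (p q : Bool) : sg p q = sg q p := by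
  cases p <;> cases q <;> simp [sg]

theorem sg_false (p : Bool) : sg false p = 1 := by simp [sg]

section System

variable {m n : ℕ}

/-! ### The Cartan matrix near a node -/

theorem w_ne_zero (P : SimpleRootSystem m n) (i : Fin (m + n)) : P.w i ≠ 0 := by
  unfold SimpleRootSystem.w; split_ifs <;> simp

variable [NeZero (m + n)] (P : SimpleRootSystem m n)

theorem a_symm (i j : Fin (m + n)) : P.a i j = P.a j i := by
  unfold SimpleRootSystem.a
  exact Finset.sum_congr rfl fun k _ => by ring

theorem a_eq (i j : Fin (m + n)) : P.a i j
    = P.w i * SimpleRootSystem.coeffα j i - P.w (i + 1) * SimpleRootSystem.coeffα j (i + 1) := by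
  unfold SimpleRootSystem.a
  have h : ∀ k, P.w k * SimpleRootSystem.coeffα i k * SimpleRootSystem.coeffα j k
      = (if k = i then P.w k * SimpleRootSystem.coeffα j k else 0)
        - (if k = i + 1 then P.w k * SimpleRootSystem.coeffα j k else 0) := by
    intro k
    rw [SimpleRootSystem.coeffα]
    split_ifs <;> ring
  simp [Finset.sum_congr rfl fun k _ => h k, Finset.sum_sub_distrib]

theorem add_ne_self (i c : Fin (m + n)) (hc : c ≠ 0) : i + c ≠ i := by
  simpa using hc

theorem fin_small_ne (h4 : 4 ≤ m + n) :
    (1 : Fin (m + n)) ≠ 0 ∧ (1 + 1 : Fin (m + n)) ≠ 0 ∧ (1 + 1 + 1 : Fin (m + n)) ≠ 0 := by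
  have h1 : (1 : Fin (m + n)).val = 1 := by
    rw [Fin.val_one', Nat.mod_eq_of_lt (by omega)]
  have h2 : (1 + 1 : Fin (m + n)).val = 2 := by
    rw [Fin.val_add, h1, Nat.mod_eq_of_lt (by omega)]
  have h3 : (1 + 1 + 1 : Fin (m + n)).val = 3 := by
    rw [Fin.val_add, h1, h2, Nat.mod_eq_of_lt (by omega)]
  refine ⟨fun h => ?_, fun h => ?_, fun h => ?_⟩ <;>
    · have := congrArg Fin.val h
      simp_all

theorem a_succ_ne (h4 : 4 ≤ m + n) (i : Fin (m + n)) : P.a i (i + 1) ≠ 0 := by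
  obtain ⟨h1, h2, -⟩ := fin_small_ne (m := m) (n := n) h4
  have e1 := add_ne_self i 1 h1
  have e2 := add_ne_self i (1 + 1) h2
  have e3 := add_ne_self (i + 1) 1 h1
  rw [← add_assoc] at e2
  rw [a_eq]
  simp [SimpleRootSystem.coeffα, e1.symm, e2.symm, e3.symm, w_ne_zero]

theorem a_succ_succ (h4 : 4 ≤ m + n) (i : Fin (m + n)) : P.a i (i + 1 + 1) = 0 := by
  obtain ⟨h1, h2, h3⟩ := fin_small_ne (m := m) (n := n) h4
  have e1 := add_ne_self i (1 + 1) h2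
  have e2 := add_ne_self i (1 + 1 + 1) h3
  have e3 := add_ne_self (i + 1) 1 h1
  have e4 := add_ne_self (i + 1) (1 + 1) h2
  simp only [← add_assoc] at e1 e2 e4
  rw [a_eq]
  simp [SimpleRootSystem.coeffα, e1.symm, e2.symm, e3.symm, e4.symm]

theorem acoef_mul (h4 : 4 ≤ m + n) (j : Fin (m + n)) :
    acoef P j * ((P.a (j + 1) j : ℤ) : R) = 1 := by
  have h : ((P.a (j + 1) j : ℤ) : ℂ) ≠ 0 := by
    rw [a_symm]; exact_mod_cast a_succ_ne P h4 j
  have h2 : ((P.a (j + 1) j : ℤ) : R) = Polynomial.C ((P.a (j + 1) j : ℤ) : ℂ) := by simp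
  rw [acoef, h2, ← Polynomial.C_mul, inv_mul_cancel₀ h, Polynomial.C_1]

/-! ### Degree shifts -/

/-- The scalar `ℏ/2`. -/
def hc : R := half * hbar

/-- Elements of an associative `ℂ[ℏ]`-algebra `Y` satisfying the recursion for the higher generators
and the following part of the defining relations of the minimalistic affine super Yangian (Serre and
odd-root relations play no role).  Working in an arbitrary `Y` keeps the ring structure of the
quotient `RingQuot (MRel P)` out of the computations. -/
structure YSys (Y : Type*) [Ring Y] [Algebra R Y] where
  /-- `h_{α_i,r}` for `r ∈ {0,1}` -/
  H : Fin (m + n) → Fin 2 → Y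
  /-- `h̃_{α_i,1}` -/
  T : Fin (m + n) → Y
  /-- `x^+_{α_i,s}` for all `s` -/
  xp : Fin (m + n) → ℕ → Y
  /-- `x^−_{α_i,s}` for all `s` -/
  xm : Fin (m + n) → ℕ → Y
  H_comm : ∀ i j r s, H i r * H j s = H j s * H i r
  T_eq : ∀ i, T i = H i 1 - hc • (H i 0 * H i 0)
  pm00 : ∀ i j, i ≠ j →
    xp i 0 * xm j 0 - sg (P.par i) (P.par j) • (xm j 0 * xp i 0) = 0
  pm10 : ∀ i, xp i 1 * xm i 0 - sg (P.par i) (P.par i) • (xm i 0 * xp i 1) = H i 1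
  pm01 : ∀ i, xp i 0 * xm i 1 - sg (P.par i) (P.par i) • (xm i 1 * xp i 0) = H i 1
  hxp : ∀ i j, H i 0 * xp j 0 - xp j 0 * H i 0 = ((P.a i j : ℤ) : R) • xp j 0
  hxm : ∀ i j, H i 0 * xm j 0 - xm j 0 * H i 0 = (-((P.a i j : ℤ) : R)) • xm j 0
  mixp : ∀ i j, (xp i 1 * xp j 0 - sg (P.par i) (P.par j) • (xp j 0 * xp i 1))
      - (xp i 0 * xp j 1 - sg (P.par i) (P.par j) • (xp j 1 * xp i 0))
    = (hc * ((P.a i j : ℤ) : R)) • (xp i 0 * xp j 0 + sg (P.par i) (P.par j) • (xp j 0 * xp i 0))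
  mixm : ∀ i j, (xm i 1 * xm j 0 - sg (P.par i) (P.par j) • (xm j 0 * xm i 1))
      - (xm i 0 * xm j 1 - sg (P.par i) (P.par j) • (xm j 1 * xm i 0))
    = (-(hc * ((P.a i j : ℤ) : R))) •
      (xm i 0 * xm j 0 + sg (P.par i) (P.par j) • (xm j 0 * xm i 0))
  htxp : ∀ i j, T i * xp j 0 - xp j 0 * T i = ((P.a i j : ℤ) : R) • xp j 1
  htxm : ∀ i j, T i * xm j 0 - xm j 0 * T i = (-((P.a i j : ℤ) : R)) • xm j 1
  xp_rec : ∀ j s, xp j (s + 2) = acoef P j • (T (j + 1) * xp j (s + 1) - xp j (s + 1) * T (j + 1))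
  xm_rec : ∀ j s,
    xm j (s + 2) = (-acoef P j) • (T (j + 1) * xm j (s + 1) - xm j (s + 1) * T (j + 1))

/-- The minimalistic affine super Yangian itself. -/
def yminSys : YSys P (Ymin P) where
  H := hg P
  T := htilY P
  xp := xpn P
  xm := xmn P
  H_comm i j r s := by
    have := RingQuot.mkAlgHom_rel R (MRel.hh (P := P) i j r s)
    simpa [sbr, sg, hg, mkY, sub_eq_zero] using this
  T_eq i := by simp [htilY, MHt, hg, hc]
  pm00 i j hij := by
    have := RingQuot.mkAlgHom_rel R (MRel.pm00 (P := P) i j)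
    simpa [sbr, xpn, xgp, xmn, xgm, mkY, hij] using this
  pm10 i := by
    have := RingQuot.mkAlgHom_rel R (MRel.pm10 (P := P) i i)
    simpa [sbr, xpn, xgp, xmn, xgm, mkY, hg] using this
  pm01 i := by
    have := RingQuot.mkAlgHom_rel R (MRel.pm01 (P := P) i i)
    simpa [sbr, xpn, xgp, xmn, xgm, mkY, hg] using this
  hxp i j := by
    have := RingQuot.mkAlgHom_rel R (MRel.hxp (P := P) i j 0)
    simpa [sbr, sg, xpn, xgp, mkY, hg] using this
  hxm i j := by
    have := RingQuot.mkAlgHom_rel R (MRel.hxm (P := P) i j 0)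
    simpa [sbr, sg, xmn, xgm, mkY, hg] using this
  mixp i j := by
    have := RingQuot.mkAlgHom_rel R (MRel.mixp (P := P) i j)
    simpa [sbr, sac, xpn, xgp, mkY, hc] using this
  mixm i j := by
    have := RingQuot.mkAlgHom_rel R (MRel.mixm (P := P) i j)
    simp only [sbr, sac, map_sub, map_add, map_smul, map_mul] at this
    exact this
  htxp i j := by
    have := RingQuot.mkAlgHom_rel R (MRel.htxp (P := P) i j)
    simpa [sbr, sg, xpn, xgp, mkY, htilY] using this
  htxm i j := by
    have := RingQuot.mkAlgHom_rel R (MRel.htxm (P := P) i j)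
    simpa [sbr, sg, xmn, xgm, mkY, htilY] using this
  xp_rec j s := by simp [xpn, sbr, sg]
  xm_rec j s := by simp [xmn, sbr, sg]

variable {P} {Y : Type*} [Ring Y] [Algebra R Y] (S : YSys P Y)

namespace YSys

theorem T_H (i j : Fin (m + n)) (r : Fin 2) : S.T i * S.H j r = S.H j r * S.T i := by
  rw [S.T_eq, sub_mul, mul_sub, S.H_comm i j 1 r, smul_mul_assoc, mul_smul_comm, mul_assoc,
    S.H_comm i j 0 r, ← mul_assoc, S.H_comm i j 0 r, mul_assoc]

theorem T_comm (i j : Fin (m + n)) : S.T i * S.T j = S.T j * S.T i := by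
  rw [S.T_eq j, sub_mul, mul_sub, S.T_H i j 1, smul_mul_assoc, mul_smul_comm,
    ← mul_assoc, S.T_H i j 0, mul_assoc, S.T_H i j 0, mul_assoc]

/-- Since the `ad h̃_{α_k,1}` commute, the recursion through the single node `j + 1` determines the
action of every `h̃_{α_k,1}` on a tower `x` over `x 0`, `x 1`; here `b k = ± a_{kj}`. -/
theorem T_tower (j : Fin (m + n)) (x : ℕ → Y) (b : Fin (m + n) → R) (β : R)
    (hβ : β * b (j + 1) = 1)
    (h0 : ∀ k, S.T k * x 0 - x 0 * S.T k = b k • x 1)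
    (hs : ∀ s, x (s + 2) = β • (S.T (j + 1) * x (s + 1) - x (s + 1) * S.T (j + 1)))
    (s : ℕ) : ∀ k, S.T k * x s - x s * S.T k = b k • x (s + 1) := by
  induction s with
  | zero => exact h0
  | succ s ih =>
    intro k
    set T := S.T k
    set L := S.T (j + 1) with hL
    have hTL : T * L = L * T := S.T_comm _ _
    have hk := ih k
    have hl := ih (j + 1)
    -- both sides are `[T, [L, x s]]`, up to the scalar `b (j + 1)`
    have key : b (j + 1) • (T * x (s + 1) - x (s + 1) * T)
        = b k • (L * x (s + 1) - x (s + 1) * L) := by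
      have e1 : b (j + 1) • (T * x (s + 1) - x (s + 1) * T)
          = T * (L * x s - x s * L) - (L * x s - x s * L) * T := by
        rw [hl]; simp only [mul_smul_comm, smul_mul_assoc]; module
      have e2 : b k • (L * x (s + 1) - x (s + 1) * L)
          = L * (T * x s - x s * T) - (T * x s - x s * T) * L := by
        rw [hk]; simp only [mul_smul_comm, smul_mul_assoc]; module
      have hTL' : ∀ z, T * (L * z) = L * (T * z) := fun z => by
        rw [← mul_assoc, hTL, mul_assoc]
      rw [e1, e2]
      simp only [mul_sub, sub_mul, mul_assoc, hTL, hTL']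
      abel
    calc T * x (s + 1) - x (s + 1) * T
        = (β * b (j + 1)) • (T * x (s + 1) - x (s + 1) * T) := by rw [hβ, one_smul]
      _ = b k • x (s + 1 + 1) := by rw [mul_smul, key, hs s]; module

theorem T_xp (h4 : 4 ≤ m + n) (k j : Fin (m + n)) (s : ℕ) :
    S.T k * S.xp j s - S.xp j s * S.T k = ((P.a k j : ℤ) : R) • S.xp j (s + 1) :=
  S.T_tower j (S.xp j) (fun k => ((P.a k j : ℤ) : R)) (acoef P j) (acoef_mul P h4 j)
    (fun k => S.htxp k j) (S.xp_rec j) s k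

theorem T_xm (h4 : 4 ≤ m + n) (k j : Fin (m + n)) (s : ℕ) :
    S.T k * S.xm j s - S.xm j s * S.T k = (-((P.a k j : ℤ) : R)) • S.xm j (s + 1) :=
  S.T_tower j (S.xm j) (fun k => -((P.a k j : ℤ) : R)) (-acoef P j)
    (by rw [neg_mul_neg, acoef_mul P h4 j]) (fun k => S.htxm k j) (S.xm_rec j) s k

/-- A scalar multiple by an integer entry `a_{kj} ≠ 0` can be cancelled, as `ℚ ⊆ ℂ[ℏ]`. -/
theorem smul_cancel {a : ℤ} (ha : a ≠ 0) {x : Y} (h : (a : R) • x = 0) : x = 0 := by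
  have h1 : Polynomial.C ((a : ℂ)⁻¹) * (a : R) = 1 := by
    have h2 : (a : R) = Polynomial.C (a : ℂ) := by simp
    rw [h2, ← Polynomial.C_mul, inv_mul_cancel₀ (by exact_mod_cast ha), Polynomial.C_1]
  rw [← one_smul R x, ← h1, mul_smul, h, smul_zero]

theorem smul_cancel' {a : ℤ} (ha : a ≠ 0) {x y : Y} (h : (a : R) • x = (a : R) • y) : x = y :=
  sub_eq_zero.mp (smul_cancel ha (by rw [smul_sub, h, sub_self]))

/-- A weight relation passes from `x` to `x'` when `[t, x] = b x'` with `t` of weight zero. -/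
theorem weight_step {h t x x' : Y} {α : R} {b : ℤ} (hb : b ≠ 0) (ht : t * h = h * t)
    (hx : h * x - x * h = α • x) (hx' : t * x - x * t = (b : R) • x') :
    h * x' - x' * h = α • x' := by
  have e : h * (t * x - x * t) - (t * x - x * t) * h
      = t * (h * x - x * h) - (h * x - x * h) * t := by
    have ht' : ∀ z, t * (h * z) = h * (t * z) := fun z => by
      rw [← mul_assoc, ht, mul_assoc]
    simp only [mul_sub, sub_mul, mul_assoc, ht, ht']
    abel
  apply smul_cancel' hb
  have e' : t * (α • x) - (α • x) * t = α • (t * x - x * t) := by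
    simp only [mul_smul_comm, smul_mul_assoc, smul_sub]
  rw [hx, e', hx'] at e
  simp only [mul_smul_comm, smul_mul_assoc] at e
  rw [smul_sub, e, smul_comm]

theorem H0_xp (h4 : 4 ≤ m + n) (i j : Fin (m + n)) (s : ℕ) :
    S.H i 0 * S.xp j s - S.xp j s * S.H i 0 = ((P.a i j : ℤ) : R) • S.xp j s := by
  induction s with
  | zero => exact S.hxp i j
  | succ s ih =>
    exact weight_step (a_symm P j (j + 1) ▸ a_succ_ne P h4 j) (S.T_H (j + 1) i 0) ih
      (S.T_xp h4 (j + 1) j s)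

theorem H0_xm (h4 : 4 ≤ m + n) (i j : Fin (m + n)) (s : ℕ) :
    S.H i 0 * S.xm j s - S.xm j s * S.H i 0 = (-((P.a i j : ℤ) : R)) • S.xm j s := by
  induction s with
  | zero => exact S.hxm i j
  | succ s ih =>
    exact weight_step (neg_ne_zero.mpr (a_symm P j (j + 1) ▸ a_succ_ne P h4 j))
      (S.T_H (j + 1) i 0) ih (by push_cast; exact S.T_xm h4 (j + 1) j s)

/-! ### Quadratic relations in higher degree -/

/-- The defect of the quadratic relation between two towers in degrees `r`, `s`. -/
def mixE (e b : R) (x y : ℕ → Y) (r s : ℕ) : Y :=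
  (x (r + 1) * y s - e • (y s * x (r + 1))) - (x r * y (s + 1) - e • (y (s + 1) * x r))
    - b • (x r * y s + e • (y s * x r))

theorem mixE_deriv (e b : R) {x y : ℕ → Y} {t : Y} {α β : R}
    (hx : ∀ r, t * x r - x r * t = α • x (r + 1)) (hy : ∀ s, t * y s - y s * t = β • y (s + 1))
    (r s : ℕ) : α • mixE e b x y (r + 1) s + β • mixE e b x y r (s + 1)
      = t * mixE e b x y r s - mixE e b x y r s * t := by
  have h1 := comm_sbr (e := e) (hx (r + 1)) (hy s) rfl
  have h2 := comm_sbr (e := e) (hx r) (hy (s + 1)) rfl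
  have h3 := comm_sbr (e := -e) (hx r) (hy s) rfl
  simp only [neg_smul, sub_neg_eq_add] at h3
  have e1 : t * mixE e b x y r s - mixE e b x y r s * t
      = (t * (x (r + 1) * y s - e • (y s * x (r + 1)))
          - (x (r + 1) * y s - e • (y s * x (r + 1))) * t)
        - (t * (x r * y (s + 1) - e • (y (s + 1) * x r))
          - (x r * y (s + 1) - e • (y (s + 1) * x r)) * t)
        - b • (t * (x r * y s + e • (y s * x r)) - (x r * y s + e • (y s * x r)) * t) := by
    simp only [mixE, mul_sub t (_ - _), sub_mul (_ - _), mul_smul_comm, smul_mul_assoc]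
    module
  rw [e1, ← h1, ← h2, ← h3]
  simp only [mixE]
  module

/-- If the degrees of the two towers can be shifted independently, the quadratic relation in
degrees `0`, `0` gives it in all degrees. -/
theorem mixE_zero (e b : R) {x y : ℕ → Y} {t t' : Y} {α β : ℤ} (hα : α ≠ 0) (hβ : β ≠ 0)
    (hx : ∀ r, t * x r - x r * t = (α : R) • x (r + 1))
    (hy : ∀ s, t * y s - y s * t = (0 : R) • y (s + 1))
    (hx' : ∀ r, t' * x r - x r * t' = (0 : R) • x (r + 1))
    (hy' : ∀ s, t' * y s - y s * t' = (β : R) • y (s + 1))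
    (h00 : mixE e b x y 0 0 = 0) (r s : ℕ) : mixE e b x y r s = 0 := by
  induction r with
  | zero =>
    induction s with
    | zero => exact h00
    | succ s ih =>
      have := mixE_deriv e b hx' hy' 0 s
      rw [ih, zero_smul, zero_add, mul_zero, zero_mul, sub_zero] at this
      exact smul_cancel hβ this
  | succ r ih =>
    have := mixE_deriv e b hx hy r s
    rw [ih, zero_smul, add_zero, mul_zero, zero_mul, sub_zero] at this
    exact smul_cancel hα this

theorem pm_left (h4 : 4 ≤ m + n) {i j k : Fin (m + n)} (hij : i ≠ j) (hkj : P.a k j ≠ 0)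
    (hki : P.a k i = 0) (s : ℕ) :
    S.xp j s * S.xm i 0 - sg (P.par i) (P.par j) • (S.xm i 0 * S.xp j s) = 0 := by
  induction s with
  | zero => rw [sg_symm]; exact S.pm00 j i hij.symm
  | succ s ih =>
    have := comm_sbr (S.T_xp h4 k j s) (S.T_xm h4 k i 0) ih
    rw [hki, Int.cast_zero, neg_zero, zero_smul, add_zero, mul_zero, zero_mul, sub_zero] at this
    exact smul_cancel hkj this

theorem pm_right (h4 : 4 ≤ m + n) {i j k : Fin (m + n)} (hij : i ≠ j) (hkj : P.a k j ≠ 0)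
    (hki : P.a k i = 0) (s : ℕ) :
    S.xm j s * S.xp i 0 - sg (P.par i) (P.par j) • (S.xp i 0 * S.xm j s) = 0 := by
  have key : S.xp i 0 * S.xm j s - sg (P.par i) (P.par j) • (S.xm j s * S.xp i 0) = 0 := by
    induction s with
    | zero => exact S.pm00 i j hij
    | succ s ih =>
      have := comm_sbr (S.T_xp h4 k i 0) (S.T_xm h4 k j s) ih
      rw [hki, Int.cast_zero, zero_smul, zero_add, mul_zero, zero_mul, sub_zero, neg_smul,
        neg_eq_zero] at this
      exact smul_cancel hkj this
  rw [sub_eq_zero.mp key, smul_smul, sg_mul_self, one_smul, sub_self]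

/-! ### The elements `[x^+_{i,r}, x^-_{i,s}]` -/

/-- `u_{rs} = [x^+_{α_i,r}, x^−_{α_i,s}]`. -/
def u (i : Fin (m + n)) (r s : ℕ) : Y :=
  S.xp i r * S.xm i s - sg (P.par i) (P.par i) • (S.xm i s * S.xp i r)

theorem T_u (h4 : 4 ≤ m + n) (k i : Fin (m + n)) (r s : ℕ) :
    S.T k * S.u i r s - S.u i r s * S.T k
      = ((P.a k i : ℤ) : R) • (S.u i (r + 1) s - S.u i r (s + 1)) := by
  rw [u, ← comm_sbr (S.T_xp h4 k i r) (S.T_xm h4 k i s) rfl, u, u]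
  module

theorem H0_u (h4 : 4 ≤ m + n) (j i : Fin (m + n)) (r s : ℕ) :
    S.H j 0 * S.u i r s = S.u i r s * S.H j 0 := by
  rw [← sub_eq_zero, u, ← comm_sbr (S.H0_xp h4 j i r) (S.H0_xm h4 j i s) rfl]
  module

theorem a_succ_ne' (h4 : 4 ≤ m + n) (i : Fin (m + n)) : P.a (i + 1) i ≠ 0 :=
  a_symm P i (i + 1) ▸ a_succ_ne P h4 i

/-- `ad T` of a coincidence of the `u_{rs}` raises the degree. -/
theorem u_shift (h4 : 4 ≤ m + n) {i : Fin (m + n)} {r s r' s' : ℕ}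
    (h : S.u i r s = S.u i r' s') :
    S.u i (r + 1) s - S.u i r (s + 1) = S.u i (r' + 1) s' - S.u i r' (s' + 1) := by
  apply smul_cancel' (a_succ_ne' (P := P) h4 i)
  rw [← S.T_u h4, ← S.T_u h4, h]

theorem u20 (h4 : 4 ≤ m + n) (i : Fin (m + n)) : S.u i 2 0 = S.u i 1 1 := by
  have h1 := S.T_u h4 (i + 1) i 1 0
  rw [show S.u i 1 0 = S.H i 1 from S.pm10 i, S.T_H, sub_self] at h1
  exact sub_eq_zero.mp (smul_cancel (a_succ_ne' (P := P) h4 i) h1.symm)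

theorem u11 (h4 : 4 ≤ m + n) (i : Fin (m + n)) : S.u i 1 1 = S.u i 0 2 := by
  have h1 := S.T_u h4 (i + 1) i 0 1
  rw [show S.u i 0 1 = S.H i 1 from S.pm01 i, S.T_H, sub_self] at h1
  exact sub_eq_zero.mp (smul_cancel (a_succ_ne' (P := P) h4 i) h1.symm)

/-- The defect `D_i = u_{21} - u_{12}`. -/
def D (i : Fin (m + n)) : Y := S.u i 2 1 - S.u i 1 2

theorem u30 (h4 : 4 ≤ m + n) (i : Fin (m + n)) : S.u i 3 0 - S.u i 2 1 = S.D i :=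
  S.u_shift h4 (S.u20 h4 i)

theorem H1_eq (i : Fin (m + n)) : S.H i 1 = S.T i + hc • (S.H i 0 * S.H i 0) := by
  rw [S.T_eq]; abel

/-- `[h_{i,2}, h_{j,1}] = -a_{ji} D_i`. -/
theorem u20_H1 (h4 : 4 ≤ m + n) (i j : Fin (m + n)) :
    S.u i 2 0 * S.H j 1 - S.H j 1 * S.u i 2 0 = -(((P.a j i : ℤ) : R) • S.D i) := by
  rw [← S.u30 h4, ← S.T_u h4 j i 2 0, S.H1_eq, mul_add, add_mul, mul_smul_comm, smul_mul_assoc,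
    ← mul_assoc, ← S.H0_u h4, mul_assoc, ← S.H0_u h4, mul_assoc]
  abel

/-! ### The action of the degree-two Cartan element on a neighbouring node -/

theorem H1_of_T {h0 h1 t x x' : Y} {a : R} (ht : t = h1 - hc • (h0 * h0))
    (h : h0 * x - x * h0 = a • x) (h' : t * x - x * t = a • x') :
    h1 * x - x * h1 = a • x' + (hc * a) • (h0 * x + x * h0) := by
  have e : h1 * x - x * h1
      = (t * x - x * t) + hc • (h0 * (h0 * x - x * h0) + (h0 * x - x * h0) * h0) := by
    rw [ht]
    simp only [mul_sub, sub_mul, mul_smul_comm, smul_mul_assoc, mul_assoc]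
    module
  rw [e, h', h]
  simp only [mul_smul_comm, smul_mul_assoc]
  module

/-- The scalar `ℏ²/12`. -/
def hd : R := Polynomial.C (1 / 3 : ℂ) * (hc * hc)

theorem three_hd : 3 * hd = hc * hc := by
  have : (3 : R) * Polynomial.C (1 / 3 : ℂ) = 1 := by
    rw [show (3 : R) = Polynomial.C (3 : ℂ) from rfl, ← Polynomial.C_mul]
    norm_num
  rw [hd, ← mul_assoc, this, one_mul]

/-- `h̃_{α_i,2} = h_{α_i,2} − ℏ h_{α_i,0} h_{α_i,1} + (ℏ²/3) h_{α_i,0}³`. -/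
def Ht (i : Fin (m + n)) : Y :=
  S.u i 2 0 - (2 * hc) • (S.H i 0 * S.H i 1) + (4 * hd) • (S.H i 0 * (S.H i 0 * S.H i 0))

/-- `i` and `j` are distinct joined nodes, and each is joined to a node not joined to the other. -/
def Nbr (P : SimpleRootSystem m n) (i j : Fin (m + n)) : Prop :=
  i ≠ j ∧ P.a i j ≠ 0 ∧ (∃ k, P.a k i ≠ 0 ∧ P.a k j = 0) ∧ (∃ k, P.a k j ≠ 0 ∧ P.a k i = 0)

theorem Nbr.symm {i j : Fin (m + n)} (h : Nbr P i j) : Nbr P j i :=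
  ⟨h.1.symm, a_symm P i j ▸ h.2.1, h.2.2.2, h.2.2.1⟩

theorem Ht_xp (h4 : 4 ≤ m + n) {i j : Fin (m + n)} (hN : Nbr P i j) (s : ℕ) :
    S.Ht i * S.xp j s - S.xp j s * S.Ht i
      = ((P.a i j : ℤ) : R) • S.xp j (s + 2) + (hd * ((P.a i j : ℤ) : R) ^ 3) • S.xp j s := by
  obtain ⟨hij, -, ⟨k, hk, hk'⟩, ⟨l, hl, hl'⟩⟩ := hN
  have hmix := mixE_zero (sg (P.par i) (P.par j)) (hc * ((P.a i j : ℤ) : R)) hk hl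
    (S.T_xp h4 k i) (by simpa [hk'] using S.T_xp h4 k j)
    (by simpa [hl'] using S.T_xp h4 l i) (S.T_xp h4 l j)
    (sub_eq_zero.mpr (S.mixp i j)) 1 s
  have h2 := mix_bracket (sg_mul_self _ _) (sub_eq_zero.mp hmix) (S.pm10 i) rfl
    (S.pm_left h4 hij hl hl' s) (S.pm_left h4 hij hl hl' (s + 1))
  exact htwo_core three_hd (S.H0_xp h4 i j s) (S.H0_xp h4 i j (s + 1))
    (H1_of_T (S.T_eq i) (S.H0_xp h4 i j s) (S.T_xp h4 i j s))
    (H1_of_T (S.T_eq i) (S.H0_xp h4 i j (s + 1)) (S.T_xp h4 i j (s + 1))) h2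

theorem Ht_xm (h4 : 4 ≤ m + n) {i j : Fin (m + n)} (hN : Nbr P i j) (s : ℕ) :
    S.Ht i * S.xm j s - S.xm j s * S.Ht i
      = (-((P.a i j : ℤ) : R)) • S.xm j (s + 2)
        + (hd * (-((P.a i j : ℤ) : R)) ^ 3) • S.xm j s := by
  obtain ⟨hij, -, ⟨k, hk, hk'⟩, ⟨l, hl, hl'⟩⟩ := hN
  have hmix := mixE_zero (sg (P.par i) (P.par j)) (-(hc * ((P.a i j : ℤ) : R)))
    (neg_ne_zero.mpr hk) (neg_ne_zero.mpr hl)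
    (by simpa using S.T_xm h4 k i) (by simpa [hk'] using S.T_xm h4 k j)
    (by simpa [hl'] using S.T_xm h4 l i) (by simpa using S.T_xm h4 l j)
    (sub_eq_zero.mpr (S.mixm i j)) 1 s
  set e := sg (P.par i) (P.par i) with he
  have hee : e * e = 1 := sg_mul_self _ _
  -- the superbracket in the opposite order differs from `u_{0r}` by the factor `-e`
  have flip : ∀ r, S.xm i r * S.xp i 0 - e • (S.xp i 0 * S.xm i r) = (-e) • S.u i 0 r := by
    intro r
    rw [u, ← he, smul_sub, smul_smul, neg_mul, hee]
    module
  have h2 := mix_bracket (sg_mul_self _ _) (sub_eq_zero.mp hmix) (flip 1) (flip 2)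
    (S.pm_right h4 hij hl hl' s) (S.pm_right h4 hij hl hl' (s + 1))
  rw [← S.u11 h4, ← S.u20 h4, show S.u i 0 1 = S.H i 1 from S.pm01 i] at h2
  have h3 := congrArg (fun z => (-e) • z) h2
  simp only [mul_smul_comm, smul_mul_assoc, ← smul_sub, ← smul_add] at h3
  rw [smul_smul, neg_mul_neg, hee, one_smul, smul_comm (-e), smul_smul (-e) (-e), neg_mul_neg, hee,
    one_smul] at h3
  exact htwo_core three_hd (S.H0_xm h4 i j s) (S.H0_xm h4 i j (s + 1))
    (H1_of_T (S.T_eq i) (S.H0_xm h4 i j s) (S.T_xm h4 i j s))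
    (H1_of_T (S.T_eq i) (S.H0_xm h4 i j (s + 1)) (S.T_xm h4 i j (s + 1)))
    (by rw [mul_neg]; exact h3)

/-- `D_i = -2 D_j` for neighbours: both sides compute `[h_{i,2}, h_{j,1}]`. -/
theorem defect_rel (h4 : 4 ≤ m + n) {i j : Fin (m + n)} (hN : Nbr P i j) :
    S.D i = -((2 : R) • S.D j) := by
  have h1 : S.Ht i * S.H j 1 - S.H j 1 * S.Ht i
      = S.u i 2 0 * S.H j 1 - S.H j 1 * S.u i 2 0 := by
    have c0 := S.H_comm i j 0 1
    have c0' : ∀ z, S.H j 1 * (S.H i 0 * z) = S.H i 0 * (S.H j 1 * z) := fun z => by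
      rw [← mul_assoc, ← c0, mul_assoc]
    simp only [Ht, mul_add, add_mul, mul_sub, sub_mul, mul_smul_comm, smul_mul_assoc, mul_assoc,
      c0, c0', S.H_comm j i 1 1]
    abel
  rw [S.u20_H1 h4, ← show S.u j 1 0 = S.H j 1 from S.pm10 j, u] at h1
  have hp := S.Ht_xp h4 hN 1
  have hm := S.Ht_xm h4 hN 0
  rw [← one_smul R (_ + _)] at hp hm
  rw [← comm_sbr hp hm rfl, a_symm P j i] at h1
  have h2 : S.u j 3 0 - S.u j 1 2 = (2 : R) • S.D j := by
    have := S.u30 h4 j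
    rw [two_smul]
    nth_rewrite 1 [← this]
    rw [D]; abel
  apply smul_cancel' hN.2.1
  rw [← h2, smul_neg, ← neg_eq_iff_eq_neg, ← h1, u, u]
  simp only [mul_add, add_mul, mul_smul_comm, smul_mul_assoc]
  module

theorem nbr_succ (h4 : 4 ≤ m + n) (i : Fin (m + n)) : Nbr P i (i + 1) := by
  refine ⟨fun h => add_ne_self i 1 (fin_small_ne h4).1 h.symm, a_succ_ne P h4 i,
    ⟨i - 1, ?_⟩, ⟨i + 1 + 1, a_succ_ne' h4 _, ?_⟩⟩
  · have h1 := a_succ_ne P h4 (i - 1)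
    have h2 := a_succ_succ P h4 (i - 1)
    rw [sub_add_cancel] at h1 h2
    exact ⟨h1, h2⟩
  · rw [a_symm]; exact a_succ_succ P h4 i

theorem D_zero (h4 : 4 ≤ m + n) (i : Fin (m + n)) : S.D i = 0 := by
  have h1 := S.defect_rel h4 (nbr_succ (P := P) h4 i)
  have h2 := S.defect_rel h4 (nbr_succ (P := P) h4 i).symm
  refine smul_cancel (a := 3) (by norm_num) ?_
  push_cast
  rw [h2] at h1
  linear_combination (norm := module) -h1

theorem u20_H1_zero (h4 : 4 ≤ m + n) (i : Fin (m + n)) :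
    S.u i 2 0 * S.H i 1 - S.H i 1 * S.u i 2 0 = 0 := by
  rw [S.u20_H1 h4, S.D_zero h4, smul_zero, neg_zero]

end YSys

end System

theorem hcn_two_one_comm (m n : ℕ) [NeZero (m + n)] (h4 : 4 ≤ m + n)
    (P : SimpleRootSystem m n) (i : Fin (m + n)) :
    sbr false false (hcn P i 2) (hcn P i 1) = 0 := by
  rw [sbr, sg_false, one_smul]
  exact (yminSys P).u20_H1_zero h4 i

/-- In the minimalistic affine super Yangian `Y_ℏ(ŝl(m|n,Π))` with
recursively defined higher generators: if `α_i` is an odd simple root and `α_j` is a simple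
root with `(α_i, α_j) ≠ 0`, then `[h_{α_j,2}, h_{α_j,1}] = 0`; likewise
`[h_{α_i,2}, h_{α_i,1}] = 0` holds for every even simple root `α_i`. -/
theorem cartan_degree_two_commutes (m n : ℕ) [NeZero (m + n)]
    (hm : 2 ≤ m) (hn : 2 ≤ n) (hmn : m ≠ n)
    (P : SimpleRootSystem m n) :
    (∀ i j : Fin (m + n), P.par i = true → P.a i j ≠ 0 →
      sbr false false (hcn P j 2) (hcn P j 1) = 0) ∧
    (∀ i : Fin (m + n), P.par i = false →
      sbr false false (hcn P i 2) (hcn P i 1) = 0) := by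
  have h4 : 4 ≤ m + n := by omega
  exact ⟨fun _ j _ _ => hcn_two_one_comm m n h4 P j, fun i _ => hcn_two_one_comm m n h4 P i⟩

end ASY
end
end
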